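/- For ξ ∈ ℚ_p^× and a function f : p^ℤ → ℂ such that f(|x|_p)χ(ξx) is integrable, ∫_{ℚ_p} f(|x|_p)χ(ξx) dx = (1 - 1/p)(1/|ξ|_p) ∑_{ν≥0} p^{-ν} f(1/(p^ν |ξ|_p)) - (1/|ξ|_p) f(p/|ξ|_p). -/

import Mathlib

open MeasureTheory Classical

/-- The p-adic fractional part of `x`. -/
noncomputable def padicFract (p : ℕ) [Fact p.Prime] (x : ℚ_[p]) : ℚ :=
  if h : ∃ r : ℚ, 0 ≤ r ∧ r < 1 ∧ (∃ k : ℕ, ∃ m : ℤ, r * (p : ℚ) ^ k = (m : ℚ)) ∧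
      ‖x - (r : ℚ_[p])‖ ≤ 1 then h.choose else 0

/-- The standard additive character `χ(x) = exp(2πi[x])` of `ℚ_p`. -/
noncomputable def stdChar (p : ℕ) [Fact p.Prime] (x : ℚ_[p]) : ℂ :=
  Complex.exp (2 * Real.pi * Complex.I * (padicFract p x : ℂ))

/-!
A character that is nontrivial on a compact open subgroup integrates to zero over it. Hence if the
kernel of `ψ` is the ball of radius `p ^ m`, then `ψ` integrates to the volume `p ^ n` over the ball
of radius `p ^ n` for `n ≤ m`, and to `0` for `n > m`. Taking differences, the sphere of radius
`p ^ n` contributes `(1 - 1 / p) * p ^ n` for `n ≤ m`, `-p ^ m` for `n = m + 1` and nothing beyond.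
A radial `f` is constant on spheres, so summing over them gives the formula. For `x ↦ χ (ξ * x)`
the kernel is the ball of radius `p ^ m = 1 / ‖ξ‖`, since `χ x = 1` exactly when `x ∈ ℤ_p`.
-/

/-- The additive group `ℤ[1/p]` of rationals whose denominator divides a power of `p`, in which the
fractional part `padicFract p` takes its values. -/
def intInvPow (p : ℕ) : AddSubgroup ℚ where
  carrier := {r | ∃ k : ℕ, ∃ m : ℤ, r * (p : ℚ) ^ k = m}
  zero_mem' := ⟨0, 0, by simp⟩
  add_mem' := by
    rintro r s ⟨k, m, hr⟩ ⟨l, n, hs⟩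
    exact ⟨k + l, m * p ^ l + n * p ^ k, by push_cast; rw [← hr, ← hs]; ring⟩
  neg_mem' := by
    rintro r ⟨k, m, hr⟩
    exact ⟨k, -m, by push_cast; rw [← hr]; ring⟩

section Character

variable {p : ℕ} [hp : Fact p.Prime]

theorem exists_norm_sub_natCast_div_pow_le_one (x : ℚ_[p]) :
    ∃ k a : ℕ, a < p ^ k ∧ ‖x - ((a / p ^ k : ℚ) : ℚ_[p])‖ ≤ 1 := by
  have hp0 : (p : ℚ_[p]) ≠ 0 := mod_cast hp.out.ne_zero
  obtain ⟨k, hk⟩ := pow_unbounded_of_one_lt ‖x‖ (Nat.one_lt_cast.mpr hp.out.one_lt : (1 : ℝ) < p)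
  have norm_mul_pow (y : ℚ_[p]) : ‖y * (p : ℚ_[p]) ^ k‖ = ‖y‖ / (p : ℝ) ^ k := by
    rw [norm_mul, Padic.norm_p_pow, zpow_neg, zpow_natCast, div_eq_mul_inv]
  let z : ℤ_[p] := ⟨x * (p : ℚ_[p]) ^ k, by
    rw [norm_mul_pow]; exact div_le_one_of_le₀ hk.le (by positivity)⟩
  refine ⟨k, z.appr k, z.appr_lt k, ?_⟩
  have hz : ‖x * (p : ℚ_[p]) ^ k - z.appr k‖ ≤ (p : ℝ) ^ (-k : ℤ) := by
    have := (PadicInt.norm_le_pow_iff_mem_span_pow (z - (z.appr k : ℤ_[p])) k).mpr (z.appr_spec k)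
    rwa [PadicInt.norm_def, PadicInt.coe_sub, PadicInt.coe_natCast] at this
  have hx : (x - ((z.appr k / p ^ k : ℚ) : ℚ_[p])) * (p : ℚ_[p]) ^ k
      = x * (p : ℚ_[p]) ^ k - z.appr k := by
    push_cast
    field_simp
  rwa [← hx, norm_mul, Padic.norm_p_pow, mul_le_iff_le_one_left (by have := hp.out.pos; positivity)]
    at hz

theorem padicFract_spec (x : ℚ_[p]) :
    padicFract p x ∈ intInvPow p ∧ ‖x - (padicFract p x : ℚ_[p])‖ ≤ 1 := by
  have hpos (k : ℕ) : (0 : ℚ) < (p : ℚ) ^ k := pow_pos (mod_cast hp.out.pos) k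
  have hex : ∃ r : ℚ, 0 ≤ r ∧ r < 1 ∧ (∃ k : ℕ, ∃ m : ℤ, r * (p : ℚ) ^ k = (m : ℚ)) ∧
      ‖x - (r : ℚ_[p])‖ ≤ 1 := by
    obtain ⟨k, a, ha, hx⟩ := exists_norm_sub_natCast_div_pow_le_one x
    exact ⟨a / p ^ k, by positivity, (div_lt_one (hpos k)).mpr (mod_cast ha),
      ⟨k, a, by rw [div_mul_cancel₀ _ (hpos k).ne', Int.cast_natCast]⟩, hx⟩
  rw [padicFract, dif_pos hex]
  exact hex.choose_spec.2.2

theorem exists_intCast_eq_of_norm_le_one {r : ℚ} (hr : r ∈ intInvPow p)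
    (hnorm : ‖(r : ℚ_[p])‖ ≤ 1) : ∃ n : ℤ, r = n := by
  obtain ⟨k, m, hm⟩ := hr
  have hp0 : (p : ℚ) ^ k ≠ 0 := pow_ne_zero _ (mod_cast hp.out.ne_zero)
  have hm' : (m : ℚ_[p]) = (r : ℚ_[p]) * (p : ℚ_[p]) ^ k := mod_cast hm.symm
  have hdvd : ‖(m : ℚ_[p])‖ ≤ (p : ℝ) ^ (-k : ℤ) := by
    rw [hm', norm_mul, Padic.norm_p_pow]
    exact mul_le_of_le_one_left (by positivity) hnorm
  obtain ⟨n, rfl⟩ := (Padic.norm_int_le_pow_iff_dvd m k).mp hdvd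
  exact ⟨n, mul_right_cancel₀ hp0 (by rw [hm]; push_cast; ring)⟩

theorem stdChar_eq_exp {x : ℚ_[p]} {r : ℚ} (hr : r ∈ intInvPow p)
    (hx : ‖x - (r : ℚ_[p])‖ ≤ 1) :
    stdChar p x = Complex.exp (2 * Real.pi * Complex.I * r) := by
  obtain ⟨hmem, hfract⟩ := padicFract_spec x
  have hnorm : ‖((padicFract p x - r : ℚ) : ℚ_[p])‖ ≤ 1 := by
    rw [Rat.cast_sub, ← sub_add_sub_cancel _ x]
    exact (Padic.nonarchimedean _ _).trans (max_le (norm_sub_rev x _ ▸ hfract) hx)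
  obtain ⟨n, hn⟩ := exists_intCast_eq_of_norm_le_one (sub_mem hmem hr) hnorm
  refine Complex.exp_eq_exp_iff_exists_int.mpr ⟨n, ?_⟩
  have hn' : (padicFract p x : ℂ) = r + n := mod_cast sub_eq_iff_eq_add'.mp hn
  rw [hn']
  ring

theorem stdChar_add (x y : ℚ_[p]) : stdChar p (x + y) = stdChar p x * stdChar p y := by
  obtain ⟨hx, hxnorm⟩ := padicFract_spec x
  obtain ⟨hy, hynorm⟩ := padicFract_spec y
  have hnorm : ‖x + y - ((padicFract p x + padicFract p y : ℚ) : ℚ_[p])‖ ≤ 1 := by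
    rw [Rat.cast_add, add_sub_add_comm]
    exact (Padic.nonarchimedean _ _).trans (max_le hxnorm hynorm)
  rw [stdChar_eq_exp (add_mem hx hy) hnorm, Rat.cast_add, mul_add, Complex.exp_add]
  rfl

theorem stdChar_eq_one_iff {x : ℚ_[p]} : stdChar p x = 1 ↔ ‖x‖ ≤ 1 := by
  constructor
  · intro h
    obtain ⟨n, hn⟩ := Complex.exp_eq_one_iff.mp h
    rw [mul_comm] at hn
    have hfract : padicFract p x = n := by
      exact_mod_cast mul_right_cancel₀ Complex.two_pi_I_ne_zero hn
    rw [← sub_add_cancel x (padicFract p x : ℚ_[p])]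
    refine (Padic.nonarchimedean _ _).trans (max_le (padicFract_spec x).2 ?_)
    rw [hfract, Rat.cast_intCast]
    exact Padic.norm_int_le_one n
  · intro h
    simpa using stdChar_eq_exp (zero_mem (intInvPow p)) (by simpa using h)

variable (p) in
/-- `stdChar p` bundled as an additive character of `ℚ_[p]`. -/
noncomputable def stdAddChar : AddChar ℚ_[p] ℂ where
  toFun := stdChar p
  map_zero_eq_one' := stdChar_eq_one_iff.mpr (by simp)
  map_add_eq_mul' := stdChar_add

@[simp]
theorem stdAddChar_apply (x : ℚ_[p]) : stdAddChar p x = stdChar p x := rfl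

end Character

section AddChar

theorem continuous_of_eq_one_of_norm_le {G M : Type*} [SeminormedAddCommGroup G] [Monoid M]
    [TopologicalSpace M] {ψ : AddChar G M} {r : ℝ} (hr : 0 < r) (hψ : ∀ x, ‖x‖ ≤ r → ψ x = 1) :
    Continuous ψ := by
  refine (IsLocallyConstant.iff_eventually_eq ψ).mpr (fun x ↦ ?_) |>.continuous
  filter_upwards [Metric.closedBall_mem_nhds x hr] with y hy
  rw [← sub_add_cancel y x, AddChar.map_add_eq_mul, hψ _ (mem_closedBall_iff_norm.mp hy), one_mul]

theorem setIntegral_addChar_eq_zero {G : Type*} [AddGroup G] [MeasurableSpace G]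
    [MeasurableAdd G] {μ : Measure G} [μ.IsAddRightInvariant] {H : AddSubgroup G}
    (hH : MeasurableSet (H : Set G)) {ψ : AddChar G ℂ} {y : G} (hy : y ∈ H) (hψ : ψ y ≠ 1) :
    ∫ x in H, ψ x ∂μ = 0 := by
  have translate : (∫ x in H, ψ x ∂μ) * ψ y = ∫ x in H, ψ x ∂μ := by
    rw [← integral_indicator hH, ← integral_mul_const,
      ← integral_add_right_eq_self ((H : Set G).indicator ψ) y]
    refine integral_congr_ae (.of_forall fun x ↦ ?_)
    by_cases hx : x ∈ H
    · simp [Set.indicator, hx, add_mem hx hy, AddChar.map_add_eq_mul]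
    · simp [Set.indicator, hx, H.add_mem_cancel_right hy]
  by_contra hne
  exact hψ ((mul_eq_left₀ hne).mp translate)

end AddChar

section Ball

variable {p : ℕ} [hp : Fact p.Prime]

theorem closedBall_norm_eq_iUnion_ball {q : ℚ_[p]} (hq : q ≠ 0) :
    Metric.closedBall 0 ‖q‖ = ⋃ j : Fin p, Metric.ball ((j : ℕ) * q) ‖q‖ := by
  ext x
  simp only [mem_closedBall_zero_iff, Set.mem_iUnion, mem_ball_iff_norm]
  constructor
  · intro hx
    let z : ℤ_[p] := ⟨x / q, by rw [norm_div]; exact div_le_one_of_le₀ hx (norm_nonneg q)⟩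
    have hz : ‖x / q - z.zmodRepr‖ < 1 := by
      have := PadicInt.norm_sub_zmodRepr_lt_one z
      rwa [PadicInt.norm_def, PadicInt.coe_sub, PadicInt.coe_natCast] at this
    refine ⟨⟨z.zmodRepr, z.zmodRepr_lt_p⟩, ?_⟩
    rw [← div_mul_cancel₀ x hq, ← sub_mul, norm_mul]
    exact mul_lt_of_lt_one_left (norm_pos_iff.mpr hq) hz
  · rintro ⟨j, hj⟩
    rw [← sub_add_cancel x ((j : ℕ) * q)]
    refine (Padic.nonarchimedean _ _).trans (max_le hj.le ?_)
    rw [norm_mul]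
    exact mul_le_of_le_one_left (norm_nonneg q) (mod_cast Padic.norm_int_le_one (p := p) (j : ℕ))

theorem pairwise_disjoint_ball_natCast_mul (q : ℚ_[p]) :
    Pairwise (Function.onFun Disjoint fun j : Fin p ↦ Metric.ball ((j : ℕ) * q) ‖q‖) := by
  intro i j hij
  refine Set.disjoint_left.mpr fun x hi hj ↦ hij ?_
  have hlt : dist ((i : ℕ) * q) ((j : ℕ) * q) < ‖q‖ :=
    (dist_triangle_max _ x _).trans_lt (max_lt (Metric.mem_ball'.mp hi) (Metric.mem_ball.mp hj))
  rw [dist_eq_norm, ← sub_mul, norm_mul,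
    mul_lt_iff_lt_one_left (Metric.pos_of_mem_ball hi)] at hlt
  have hdvd : (p : ℤ) ∣ (i : ℕ) - (j : ℕ) := Padic.norm_intCast_lt_one_iff.mp (mod_cast hlt)
  exact Fin.ext ((Nat.modEq_iff_dvd.mpr hdvd).symm.eq_of_lt_of_lt i.isLt j.isLt)

theorem ball_zpow_eq_closedBall (n : ℤ) :
    Metric.ball (0 : ℚ_[p]) (p ^ n) = Metric.closedBall 0 (p ^ (n - 1)) := by
  ext x
  simp only [mem_ball_zero_iff, mem_closedBall_zero_iff, Padic.norm_lt_pow_iff_norm_le_pow_sub_one]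

theorem iUnion_sphere_zpow : ⋃ n : ℤ, Metric.sphere (0 : ℚ_[p]) (p ^ n) = {0}ᶜ := by
  have hp0 : (p : ℝ) ≠ 0 := mod_cast hp.out.ne_zero
  ext x
  simp only [Set.mem_iUnion, mem_sphere_zero_iff_norm, Set.mem_compl_singleton_iff]
  exact ⟨fun ⟨n, hn⟩ ↦ norm_ne_zero_iff.mp (hn ▸ zpow_ne_zero n hp0),
    fun hx ↦ ⟨_, Padic.norm_eq_zpow_neg_valuation hx⟩⟩

theorem pairwise_disjoint_sphere_zpow :
    Pairwise (Function.onFun Disjoint fun n : ℤ ↦ Metric.sphere (0 : ℚ_[p]) (p ^ n)) := by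
  have hp1 : (1 : ℝ) < p := mod_cast hp.out.one_lt
  refine fun i j hij ↦ Set.disjoint_left.mpr fun x hi hj ↦ hij ?_
  rw [mem_sphere_zero_iff_norm] at hi hj
  exact zpow_right_injective₀ (zero_lt_one.trans hp1) hp1.ne' (hi.symm.trans hj)

variable [MeasurableSpace ℚ_[p]] [BorelSpace ℚ_[p]]

theorem hasSum_setIntegral_sphere_zpow {E : Type*} [NormedAddCommGroup E] [NormedSpace ℝ E]
    {μ : Measure ℚ_[p]} [NullSingletonClass μ] {F : ℚ_[p] → E} (hF : Integrable F μ) :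
    HasSum (fun n : ℤ ↦ ∫ x in Metric.sphere 0 (p ^ n), F x ∂μ) (∫ x, F x ∂μ) := by
  have := hasSum_integral_iUnion (fun n : ℤ ↦ Metric.isClosed_sphere.measurableSet)
    pairwise_disjoint_sphere_zpow hF.integrableOn
  rwa [iUnion_sphere_zpow, restrict_compl_singleton] at this

variable (μ : Measure ℚ_[p]) [μ.IsAddHaarMeasure]

theorem measureReal_closedBall_norm {q : ℚ_[p]} (hq : q ≠ 0) :
    μ.real (Metric.closedBall 0 ‖q‖) = p * μ.real (Metric.ball 0 ‖q‖) := by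
  rw [closedBall_norm_eq_iUnion_ball hq,
    measureReal_iUnion_fintype (pairwise_disjoint_ball_natCast_mul q)
      (fun j ↦ Metric.isOpen_ball.measurableSet) (fun j ↦ Metric.isBounded_ball.measure_lt_top.ne)]
  simp [Measure.addHaar_real_ball_center]

theorem measureReal_closedBall_zpow (n : ℤ) :
    μ.real (Metric.closedBall 0 (p ^ n)) = p ^ n * μ.real (Metric.closedBall 0 1) := by
  have hp0 : (p : ℝ) ≠ 0 := mod_cast hp.out.ne_zero
  have step (k : ℤ) : μ.real (Metric.closedBall 0 (p ^ k))
      = p * μ.real (Metric.closedBall 0 (p ^ (k - 1))) := by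
    have hq : (p : ℚ_[p]) ^ (-k) ≠ 0 := zpow_ne_zero _ (mod_cast hp.out.ne_zero)
    simpa only [Padic.norm_p_zpow, neg_neg, ball_zpow_eq_closedBall]
      using measureReal_closedBall_norm μ hq
  induction n using Int.induction_on with
  | zero => simp
  | succ k ih => rw [step, add_sub_cancel_right, ih, zpow_add_one₀ hp0]; ring
  | pred k ih => rw [← mul_right_inj' hp0, ← step, ih, zpow_sub_one₀ hp0]; field_simp

end Ball

section Conductor

variable {p : ℕ} [hp : Fact p.Prime] [MeasurableSpace ℚ_[p]] [BorelSpace ℚ_[p]]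
  (μ : Measure ℚ_[p]) [μ.IsAddHaarMeasure] {ψ : AddChar ℚ_[p] ℂ} {m n : ℤ}

theorem setIntegral_closedBall_addChar_of_le (hψ : ∀ x, ‖x‖ ≤ (p : ℝ) ^ m → ψ x = 1)
    (hn : n ≤ m) :
    ∫ x in Metric.closedBall 0 (p ^ n), ψ x ∂μ = p ^ n * μ.real (Metric.closedBall 0 1) := by
  have hp1 : (1 : ℝ) ≤ p := mod_cast hp.out.one_le
  have heq : Set.EqOn ψ 1 (Metric.closedBall 0 (p ^ n)) := fun x hx ↦
    hψ x ((mem_closedBall_zero_iff.mp hx).trans (zpow_le_zpow_right₀ hp1 hn))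
  rw [setIntegral_congr_fun Metric.isClosed_closedBall.measurableSet heq]
  simp [measureReal_closedBall_zpow]

theorem setIntegral_closedBall_addChar_of_lt (hψ : ∀ x, ψ x = 1 → ‖x‖ ≤ (p : ℝ) ^ m)
    (hn : m < n) : ∫ x in Metric.closedBall 0 (p ^ n), ψ x ∂μ = 0 := by
  have hp1 : (1 : ℝ) < p := mod_cast hp.out.one_lt
  let H := IsUltrametricDist.closedBall_openAddSubgroup ℚ_[p] (zpow_pos (zero_lt_one.trans hp1) n)
  have hnorm : ‖(p : ℚ_[p]) ^ (-n)‖ = (p : ℝ) ^ n := by rw [Padic.norm_p_zpow, neg_neg]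
  refine setIntegral_addChar_eq_zero (H := H.toAddSubgroup) (y := (p : ℚ_[p]) ^ (-n))
    Metric.isClosed_closedBall.measurableSet (mem_closedBall_zero_iff.mpr hnorm.le) fun h ↦ ?_
  exact (zpow_lt_zpow_right₀ hp1 hn).not_ge (hnorm ▸ hψ _ h)

theorem setIntegral_sphere_addChar (hψ : ∀ x, ‖x‖ ≤ (p : ℝ) ^ m → ψ x = 1) (n : ℤ) :
    ∫ x in Metric.sphere 0 (p ^ n), ψ x ∂μ
      = ∫ x in Metric.closedBall 0 (p ^ n), ψ x ∂μ
        - ∫ x in Metric.closedBall 0 (p ^ (n - 1)), ψ x ∂μ := by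
  have hpm : (0 : ℝ) < (p : ℝ) ^ m := zpow_pos (mod_cast hp.out.pos) m
  rw [← Metric.closedBall_sdiff_ball, setIntegral_sdiff Metric.isOpen_ball.measurableSet
    ((continuous_of_eq_one_of_norm_le hpm hψ).continuousOn.integrableOn_compact
      (isCompact_closedBall _ _)) Metric.ball_subset_closedBall, ball_zpow_eq_closedBall]

theorem setIntegral_sphere_addChar_of_le (hψ : ∀ x, ‖x‖ ≤ (p : ℝ) ^ m → ψ x = 1)
    (hn : n ≤ m) :
    ∫ x in Metric.sphere 0 (p ^ n), ψ x ∂μ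
      = (1 - 1 / p) * p ^ n * μ.real (Metric.closedBall 0 1) := by
  have hp0 : (p : ℂ) ≠ 0 := mod_cast hp.out.ne_zero
  rw [setIntegral_sphere_addChar μ hψ, setIntegral_closedBall_addChar_of_le μ hψ hn,
    setIntegral_closedBall_addChar_of_le μ hψ (by lia), zpow_sub_one₀ hp0]
  ring

theorem setIntegral_sphere_addChar_succ (hψ : ∀ x, ψ x = 1 ↔ ‖x‖ ≤ (p : ℝ) ^ m) :
    ∫ x in Metric.sphere 0 (p ^ (m + 1)), ψ x ∂μ = -(p ^ m * μ.real (Metric.closedBall 0 1)) := by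
  rw [setIntegral_sphere_addChar μ (fun x ↦ (hψ x).mpr), add_sub_cancel_right,
    setIntegral_closedBall_addChar_of_lt μ (fun x ↦ (hψ x).mp) (lt_add_one m),
    setIntegral_closedBall_addChar_of_le μ (fun x ↦ (hψ x).mpr) le_rfl, zero_sub]

theorem setIntegral_sphere_addChar_of_lt (hψ : ∀ x, ψ x = 1 ↔ ‖x‖ ≤ (p : ℝ) ^ m)
    (hn : m + 1 < n) : ∫ x in Metric.sphere 0 (p ^ n), ψ x ∂μ = 0 := by
  rw [setIntegral_sphere_addChar μ (fun x ↦ (hψ x).mpr),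
    setIntegral_closedBall_addChar_of_lt μ (fun x ↦ (hψ x).mp) (by lia),
    setIntegral_closedBall_addChar_of_lt μ (fun x ↦ (hψ x).mp) (by lia), sub_zero]

end Conductor

theorem eq_add_tsum_sub_natCast_of_hasSum {E : Type*} [AddCommGroup E] [TopologicalSpace E]
    [IsTopologicalAddGroup E] [T2Space E] {a : ℤ → E} {s : E} {m : ℤ} (ha : HasSum a s)
    (hzero : ∀ n, m + 1 < n → a n = 0) : s = a (m + 1) + ∑' ν : ℕ, a (m - ν) := by
  have hinj : Function.Injective fun ν : ℕ ↦ m + 1 - (ν : ℤ) := fun i j h ↦ by simpa using h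
  have hrange : ∀ n ∉ Set.range (fun ν : ℕ ↦ m + 1 - (ν : ℤ)), a n = 0 := fun n hn ↦
    hzero n (not_le.mp fun hle ↦ hn ⟨(m + 1 - n).toNat, by lia⟩)
  have hsum := (hinj.hasSum_iff hrange).mpr ha
  rw [← hsum.tsum_eq, hsum.summable.tsum_eq_zero_add]
  simp [add_sub_add_right_eq_sub]

section Radial

variable {p : ℕ} [hp : Fact p.Prime] [MeasurableSpace ℚ_[p]] [BorelSpace ℚ_[p]]
  {E : Type*} [NormedAddCommGroup E] [NormedSpace ℂ E]

theorem setIntegral_sphere_addChar_smul_of_le (μ : Measure ℚ_[p]) [μ.IsAddHaarMeasure]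
    {ψ : AddChar ℚ_[p] ℂ} {m : ℤ} (hψ : ∀ x, ‖x‖ ≤ (p : ℝ) ^ m → ψ x = 1) (f : ℝ → E) (ν : ℕ) :
    (∫ x in Metric.sphere 0 (p ^ (m - ν)), ψ x ∂μ) • f (p ^ (m - ν))
      = ((1 - 1 / (p : ℂ)) * p ^ m * μ.real (Metric.closedBall 0 1)) •
          ((p : ℂ) ^ (-(ν : ℤ)) • f (p ^ (m - ν))) := by
  rw [setIntegral_sphere_addChar_of_le μ hψ (by lia), smul_smul, sub_eq_add_neg m,
    zpow_add₀ (mod_cast hp.out.ne_zero : (p : ℂ) ≠ 0)]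
  congr 1
  ring

variable [CompleteSpace E]

theorem hasSum_setIntegral_sphere_smul_radial {μ : Measure ℚ_[p]} [NullSingletonClass μ]
    {g : ℚ_[p] → ℂ} {f : ℝ → E} (hint : Integrable (fun x ↦ g x • f ‖x‖) μ) :
    HasSum (fun n : ℤ ↦ (∫ x in Metric.sphere 0 (p ^ n), g x ∂μ) • f (p ^ n))
      (∫ x, g x • f ‖x‖ ∂μ) := by
  refine (hasSum_setIntegral_sphere_zpow hint).congr_fun fun n ↦ ?_
  rw [← integral_smul_const]
  refine setIntegral_congr_fun Metric.isClosed_sphere.measurableSet fun x hx ↦ ?_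
  rw [mem_sphere_zero_iff_norm.mp hx]

theorem integral_addChar_smul_radial (μ : Measure ℚ_[p]) [μ.IsAddHaarMeasure]
    {ψ : AddChar ℚ_[p] ℂ} {m : ℤ} (hψ : ∀ x, ψ x = 1 ↔ ‖x‖ ≤ (p : ℝ) ^ m)
    {f : ℝ → E} (hint : Integrable (fun x ↦ ψ x • f ‖x‖) μ) :
    ∫ x, ψ x • f ‖x‖ ∂μ
      = (μ.real (Metric.closedBall 0 1) : ℂ) •
        (((1 - 1 / (p : ℂ)) * p ^ m) • (∑' ν : ℕ, (p : ℂ) ^ (-(ν : ℤ)) • f (p ^ (m - ν)))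
          - (p : ℂ) ^ m • f (p ^ (m + 1))) := by
  rw [eq_add_tsum_sub_natCast_of_hasSum (hasSum_setIntegral_sphere_smul_radial hint)
    fun n hn ↦ by rw [setIntegral_sphere_addChar_of_lt μ hψ hn, zero_smul],
    setIntegral_sphere_addChar_succ μ hψ,
    tsum_congr (setIntegral_sphere_addChar_smul_of_le μ (fun x ↦ (hψ x).mpr) f),
    tsum_const_smul'']
  module

theorem padic_radial_char_integral_general (μ : Measure ℚ_[p]) [μ.IsAddHaarMeasure]
    {ψ : AddChar ℚ_[p] ℂ} {ξ : ℚ_[p]} (hξ : ξ ≠ 0) (hψ : ∀ x, ψ x = 1 ↔ ‖ξ * x‖ ≤ 1)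
    {f : ℝ → E} (hint : Integrable (fun x ↦ ψ x • f ‖x‖) μ) :
    ∫ x, ψ x • f ‖x‖ ∂μ
      = (μ.real (Metric.closedBall 0 1) : ℂ) •
        (((1 - 1 / (p : ℂ)) * (1 / (‖ξ‖ : ℂ))) •
            (∑' ν : ℕ, (p : ℂ) ^ (-(ν : ℤ)) • f (1 / ((p : ℝ) ^ ν * ‖ξ‖)))
          - (1 / (‖ξ‖ : ℂ)) • f ((p : ℝ) / ‖ξ‖)) := by
  have hp0 : (p : ℝ) ≠ 0 := mod_cast hp.out.ne_zero
  obtain ⟨m, hm⟩ : ∃ m : ℤ, ‖ξ‖ = (p : ℝ) ^ (-m) := ⟨_, Padic.norm_eq_zpow_neg_valuation hξ⟩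
  have hcond (x : ℚ_[p]) : ψ x = 1 ↔ ‖x‖ ≤ (p : ℝ) ^ m := by
    rw [hψ, norm_mul, hm, zpow_neg, inv_mul_le_one₀ (zpow_pos (mod_cast hp.out.pos) m)]
  have hinv : 1 / (‖ξ‖ : ℂ) = (p : ℂ) ^ m := by simp [hm]
  have hinner (ν : ℕ) : 1 / ((p : ℝ) ^ ν * ‖ξ‖) = (p : ℝ) ^ (m - ν) := by
    rw [hm, ← zpow_natCast, ← zpow_add₀ hp0, one_div, ← zpow_neg]
    congr 1
    ring
  have houter : (p : ℝ) / ‖ξ‖ = (p : ℝ) ^ (m + 1) := by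
    rw [hm, zpow_neg, div_inv_eq_mul, zpow_add_one₀ hp0, mul_comm]
  simp only [hinv, hinner, houter, integral_addChar_smul_radial μ hcond hint]

end Radial

/-- For `ξ ≠ 0` and a radial function `f(|x|_p)` with `f(|x|_p)χ(ξx)` integrable,
`∫_{ℚ_p} f(|x|_p)χ(ξx) dx
  = (1-1/p)(1/|ξ|) ∑_{ν≥0} p^{-ν} f(1/(p^ν|ξ|)) - (1/|ξ|) f(p/|ξ|)`. -/
theorem padic_radial_char_integral (p : ℕ) [Fact p.Prime]
    [MeasurableSpace ℚ_[p]] [BorelSpace ℚ_[p]]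
    (μ : Measure ℚ_[p]) [μ.IsAddHaarMeasure]
    (hμ : μ {x : ℚ_[p] | ‖x‖ ≤ 1} = 1)
    (f : ℝ → ℂ) (ξ : ℚ_[p]) (hξ : ξ ≠ 0)
    (hint : Integrable (fun x : ℚ_[p] => f ‖x‖ * stdChar p (ξ * x)) μ) :
    ∫ x : ℚ_[p], f ‖x‖ * stdChar p (ξ * x) ∂μ
      = (1 - 1 / (p : ℂ)) * (1 / (‖ξ‖ : ℂ)) *
          (∑' ν : ℕ, (p : ℂ) ^ (-(ν : ℤ)) * f (1 / ((p : ℝ) ^ ν * ‖ξ‖)))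
        - (1 / (‖ξ‖ : ℂ)) * f ((p : ℝ) / ‖ξ‖) := by
  have hcond (x : ℚ_[p]) : (stdAddChar p).mulShift ξ x = 1 ↔ ‖ξ * x‖ ≤ 1 := stdChar_eq_one_iff
  have hunit : μ.real (Metric.closedBall 0 1) = 1 := by
    simpa [Measure.real, Metric.closedBall] using congrArg ENNReal.toReal hμ
  simpa [hunit, mul_comm (f _)] using padic_radial_char_integral_general μ hξ hcond (f := f)
    (by simpa [mul_comm (f _)] using hint)
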